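/- Let n, n', m, c be natural numbers with c ≤ n, let O ⊆ Fin n with |O| = c, let ε ≥ 0, and let 𝓖_A be a nonempty finite ε-almost-universal₂ family of functions from (Fin n → ZMod 2) to (Fin m → ZMod 2). Let X be uniform on (Fin n → ZMod 2), W uniform on (Fin n' → ZMod 2), G_A uniform on 𝓖_A, and G_B uniform on a nonempty finite set 𝓗, with X, W, G_A, G_B jointly independent (the product of uniform measures). Let Φ be any function taking as input the restriction of X to O together with W and G_B, with values in a finite type. Then the mutual information (in nats) satisfies I[ G_A(X) : (Φ(X|_O, W, G_B), G_A, G_B) ] ≤ ln( 2^{m+c}/2^n + 2^m · ε ). -/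

import Mathlib

/-- A finite family `𝓖` of functions from `R` to `T` is `ε`-almost-universal₂. -/
def AlmostUniversal₂ {R T : Type*} [DecidableEq T] (ε : ℝ) (𝓖 : Finset (R → T)) : Prop :=
  ∀ r r' : R, r ≠ r' →
    (((𝓖.filter fun g => g r = g r').card : ℝ) / (𝓖.card : ℝ)) ≤ ε

/-- Mutual information (in nats) between the finitely-valued random variables `X` and `Y`
on a finite probability space with probability mass function `P`. -/
noncomputable def mutualInfo {Ω A B : Type*} [Fintype Ω] [Fintype A] [Fintype B]
    [DecidableEq A] [DecidableEq B] (P : Ω → ℝ) (X : Ω → A) (Y : Ω → B) : ℝ :=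
  ∑ a : A, ∑ b : B,
    (∑ ω ∈ Finset.univ.filter (fun ω => X ω = a ∧ Y ω = b), P ω) *
      Real.log
        ((∑ ω ∈ Finset.univ.filter (fun ω => X ω = a ∧ Y ω = b), P ω) /
          ((∑ ω ∈ Finset.univ.filter (fun ω => X ω = a), P ω) *
            (∑ ω ∈ Finset.univ.filter (fun ω => Y ω = b), P ω)))

/-- Decidable equality for the value type of the eavesdropper's view (helper instance). -/
instance decEqView (n m : ℕ) (𝓖A : Finset ((Fin n → ZMod 2) → (Fin m → ZMod 2)))
    {𝓗 F : Type*} [DecidableEq 𝓗] [DecidableEq F] :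
    DecidableEq (F × {g // g ∈ 𝓖A} × 𝓗) := instDecidableEqProd

/-!
The mutual information of a key `K` with an observation `V` is at most `log (|A| * p)`, where `A`
is the set of keys and `p` the conditional collision probability of `K` given `V`: Jensen's
inequality for `log` handles the conditional part, and the entropy of `K` is at most `log |A|`. By
Cauchy-Schwarz, `p` can only decrease when `V` is replaced by a function of `V`, so the observer
may be given the whole leakage `ρ x : S` and all seeds. Then `p` averages, over `x`, the
probability that a uniform `x'` in the fibre of `ρ` through `x` collides with `x` under the hash
function. The pairs with `x' = x` contribute at most `|S| / |R|`, because the sum over `x` of the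
inverse size of its fibre is at most `|S|`; the other pairs contribute at most `ε` by
almost-universality.
-/

open Finset

lemma sum_mul_log_le_log {ι : Type*} {s : Finset ι} {w x : ι → ℝ} {C : ℝ}
    (hw : ∀ i ∈ s, 0 ≤ w i) (hw1 : ∑ i ∈ s, w i = 1) (hx : ∀ i ∈ s, w i ≠ 0 → 0 < x i)
    (hC : ∑ i ∈ s, w i * x i ≤ C) : ∑ i ∈ s, w i * Real.log (x i) ≤ Real.log C := by
  classical
  set t := s.filter fun i => w i ≠ 0
  have sum_support (f : ι → ℝ) : ∑ i ∈ t, w i * f i = ∑ i ∈ s, w i * f i :=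
    sum_filter_of_ne fun _ _ => left_ne_zero_of_mul
  have weights_sum : ∑ i ∈ t, w i = 1 := (sum_filter_ne_zero s).trans hw1
  have weight_pos : ∀ i ∈ t, 0 < w i := fun i hi =>
    (hw i (mem_filter.1 hi).1).lt_of_ne' (mem_filter.1 hi).2
  have value_pos : ∀ i ∈ t, 0 < x i := fun i hi => hx i (mem_filter.1 hi).1 (mem_filter.1 hi).2
  have mean_pos : 0 < ∑ i ∈ t, w i * x i :=
    sum_pos (fun i hi => mul_pos (weight_pos i hi) (value_pos i hi))
      (nonempty_of_sum_ne_zero (weights_sum.trans_ne one_ne_zero))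
  calc ∑ i ∈ s, w i * Real.log (x i) = ∑ i ∈ t, w i * Real.log (x i) := (sum_support _).symm
    _ ≤ Real.log (∑ i ∈ t, w i * x i) :=
        strictConcaveOn_log_Ioi.concaveOn.le_map_sum (fun i hi => (weight_pos i hi).le)
          weights_sum value_pos
    _ ≤ Real.log C := Real.log_le_log mean_pos ((sum_support x).trans_le hC)

section FiniteProbability

variable {Ω A B V : Type*} [Fintype Ω] {P : Ω → ℝ}

/-- The probability of the event `p` under the mass function `P`, written so that the terms of
`mutualInfo` are instances of it. The weights `P` need not sum to `1`. -/
def prob (P : Ω → ℝ) (p : Ω → Prop) [DecidablePred p] : ℝ := ∑ ω with p ω, P ω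

lemma prob_nonneg (hP : ∀ ω, 0 ≤ P ω) (p : Ω → Prop) [DecidablePred p] : 0 ≤ prob P p :=
  sum_nonneg fun ω _ => hP ω

lemma prob_pos (hP : ∀ ω, 0 ≤ P ω) {p : Ω → Prop} [DecidablePred p] {ω : Ω} (hω : P ω ≠ 0)
    (hp : p ω) : 0 < prob P p :=
  sum_pos' (fun ω _ => hP ω) ⟨ω, by simpa using hp, (hP ω).lt_of_ne' hω⟩

lemma prob_const (c : ℝ) (p : Ω → Prop) [DecidablePred p] :
    prob (fun _ => c) p = #{ω | p ω} * c := by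
  rw [prob, sum_const, nsmul_eq_mul]

lemma prob_mono (hP : ∀ ω, 0 ≤ P ω) {p q : Ω → Prop} [DecidablePred p] [DecidablePred q]
    (hpq : ∀ ω, p ω → q ω) : prob P p ≤ prob P q :=
  sum_le_sum_of_subset_of_nonneg (monotone_filter_right _ fun ω _ => hpq ω) fun ω _ _ => hP ω

lemma sum_prob_and_eq [Fintype V] [DecidableEq V] [DecidableEq B] (P : Ω → ℝ) (p : Ω → Prop)
    [DecidablePred p] (Y : Ω → V) (f : V → B) (b : B) :
    ∑ v with f v = b, prob P (fun ω => p ω ∧ Y ω = v) = prob P fun ω => p ω ∧ f (Y ω) = b := by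
  rw [prob, ← sum_fiberwise_of_maps_to (g := Y) (t := {v | f v = b}) (by simp)]
  refine sum_congr rfl fun v hv => sum_congr ?_ fun _ _ => rfl
  ext ω
  simp only [mem_filter, mem_univ, true_and] at hv ⊢
  grind

lemma sum_mul_comp_eq_sum_prob [Fintype A] [DecidableEq A] (P : Ω → ℝ) (X : Ω → A) (h : A → ℝ) :
    ∑ ω, P ω * h (X ω) = ∑ a, prob P (fun ω => X ω = a) * h a := by
  simp_rw [prob, sum_mul]
  rw [← sum_fiberwise univ X]
  exact sum_congr rfl fun a _ => sum_congr rfl fun ω hω => by rw [(mem_filter.1 hω).2]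

lemma sum_mul_comp_eq_sum_prob₂ [Fintype A] [DecidableEq A] [Fintype B] [DecidableEq B] (P : Ω → ℝ)
    (X : Ω → A) (Y : Ω → B) (h : A → B → ℝ) :
    ∑ ω, P ω * h (X ω) (Y ω) = ∑ a, ∑ b, prob P (fun ω => X ω = a ∧ Y ω = b) * h a b := by
  simpa only [Fintype.sum_prod_type, Prod.mk.injEq] using
    sum_mul_comp_eq_sum_prob P (fun ω => (X ω, Y ω)) fun ab => h ab.1 ab.2

lemma sum_mul_inv_prob_le_card [Fintype A] [DecidableEq A] (P : Ω → ℝ) (X : Ω → A) :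
    ∑ ω, P ω * (prob P fun ω' => X ω' = X ω)⁻¹ ≤ Fintype.card A := by
  rw [sum_mul_comp_eq_sum_prob P X fun a => (prob P fun ω => X ω = a)⁻¹]
  calc ∑ a, prob P (fun ω => X ω = a) * (prob P fun ω => X ω = a)⁻¹
      ≤ ∑ _a : A, (1 : ℝ) := sum_le_sum fun a _ => mul_inv_le_one
    _ = Fintype.card A := by simp

end FiniteProbability

section CondCollisionProb

variable {Ω A B V : Type*} [Fintype Ω] [DecidableEq A] [DecidableEq B]

/-- The probability that two samples of `X` agree when they are drawn independently given the
same value of `Y`: the average over `ω` of the conditional probability of `X = X ω` given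
`Y = Y ω`. -/
noncomputable def condCollisionProb (P : Ω → ℝ) (X : Ω → A) (Y : Ω → B) : ℝ :=
  ∑ ω, P ω * (prob P (fun ω' => X ω' = X ω ∧ Y ω' = Y ω) / prob P fun ω' => Y ω' = Y ω)

variable {P : Ω → ℝ}

lemma mutualInfo_eq_sum [Fintype A] [Fintype B] (P : Ω → ℝ) (X : Ω → A) (Y : Ω → B) :
    mutualInfo P X Y = ∑ ω, P ω * Real.log (prob P (fun ω' => X ω' = X ω ∧ Y ω' = Y ω) /
      (prob P (fun ω' => X ω' = X ω) * prob P fun ω' => Y ω' = Y ω)) :=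
  (sum_mul_comp_eq_sum_prob₂ P X Y fun a b => Real.log (prob P (fun ω => X ω = a ∧ Y ω = b) /
    (prob P (fun ω => X ω = a) * prob P fun ω => Y ω = b))).symm

lemma condCollisionProb_eq_sum [Fintype A] [Fintype B] (P : Ω → ℝ) (X : Ω → A) (Y : Ω → B) :
    condCollisionProb P X Y =
      ∑ a, ∑ b, prob P (fun ω => X ω = a ∧ Y ω = b) ^ 2 / prob P fun ω => Y ω = b := by
  simp_rw [sq, mul_div_assoc]
  exact sum_mul_comp_eq_sum_prob₂ P X Y fun a b =>
    prob P (fun ω => X ω = a ∧ Y ω = b) / prob P fun ω => Y ω = b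

lemma sq_prob_div_le_sum [Fintype V] [DecidableEq V] (hP : ∀ ω, 0 ≤ P ω) (p : Ω → Prop)
    [DecidablePred p] (Y : Ω → V) (f : V → B) (b : B) :
    prob P (fun ω => p ω ∧ f (Y ω) = b) ^ 2 / prob P (fun ω => f (Y ω) = b) ≤
      ∑ v with f v = b, prob P (fun ω => p ω ∧ Y ω = v) ^ 2 / prob P fun ω => Y ω = v := by
  have marginal : prob P (fun ω => f (Y ω) = b) =
      ∑ v with f v = b, prob P fun ω => Y ω = v := by
    simpa only [true_and] using (sum_prob_and_eq P (fun _ => True) Y f b).symm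
  have summand_nonneg (v : V) :
      0 ≤ prob P (fun ω => p ω ∧ Y ω = v) ^ 2 / prob P fun ω => Y ω = v :=
    div_nonneg (sq_nonneg _) (prob_nonneg hP _)
  -- Some values `v` may be null, so `sq_sum_div_le_sum_sq_div` does not apply.
  refine div_le_of_le_mul₀ (prob_nonneg hP _) (sum_nonneg fun v _ => summand_nonneg v) ?_
  rw [marginal, ← sum_prob_and_eq]
  refine sum_sq_le_sum_mul_sum_of_sq_le_mul _ (fun v _ => summand_nonneg v)
    (fun v _ => prob_nonneg hP _) fun v _ => ?_
  have joint_le : prob P (fun ω => p ω ∧ Y ω = v) ≤ prob P fun ω => Y ω = v :=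
    prob_mono hP fun _ => And.right
  refine (div_mul_cancel_of_imp fun marginal_eq_zero => ?_).ge
  rw [(joint_le.trans_eq marginal_eq_zero).antisymm (prob_nonneg hP _), sq, zero_mul]

lemma condCollisionProb_comp_le [Finite A] [Finite B] [Finite V] [DecidableEq V]
    (hP : ∀ ω, 0 ≤ P ω) (X : Ω → A) (Y : Ω → V) (f : V → B) :
    condCollisionProb P X (fun ω => f (Y ω)) ≤ condCollisionProb P X Y := by
  have := Fintype.ofFinite A
  have := Fintype.ofFinite B
  have := Fintype.ofFinite V
  simp_rw [condCollisionProb_eq_sum]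
  refine sum_le_sum fun a _ => ?_
  rw [← sum_fiberwise univ f]
  exact sum_le_sum fun b _ => sq_prob_div_le_sum hP _ Y f b

lemma sum_mul_log_inv_card_mul_prob_nonpos [Fintype A] (hP : ∀ ω, 0 ≤ P ω)
    (hP1 : ∑ ω, P ω = 1) (X : Ω → A) :
    ∑ ω, P ω * Real.log (Fintype.card A * prob P fun ω' => X ω' = X ω)⁻¹ ≤ 0 := by
  rw [← Real.log_one]
  refine sum_mul_log_le_log (fun ω _ => hP ω) hP1 (fun ω _ hω => ?_) ?_
  · have : Nonempty A := ⟨X ω⟩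
    exact inv_pos.2 (mul_pos (Nat.cast_pos.2 Fintype.card_pos) (prob_pos hP hω rfl))
  · simp only [mul_inv, mul_left_comm (P _), ← mul_sum]
    exact inv_mul_le_one_of_le₀ (sum_mul_inv_prob_le_card P X) (Nat.cast_nonneg _)

theorem mutualInfo_le_log_of_condCollisionProb_le [Fintype A] [Fintype B] (hP : ∀ ω, 0 ≤ P ω)
    (hP1 : ∑ ω, P ω = 1) (X : Ω → A) (Y : Ω → B) {C : ℝ}
    (hC : Fintype.card A * condCollisionProb P X Y ≤ C) :
    mutualInfo P X Y ≤ Real.log C := by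
  set J : Ω → ℝ := fun ω => prob P fun ω' => X ω' = X ω ∧ Y ω' = Y ω
  set K : Ω → ℝ := fun ω => prob P fun ω' => X ω' = X ω
  set M : Ω → ℝ := fun ω => prob P fun ω' => Y ω' = Y ω
  have card_pos (ω : Ω) : (0 : ℝ) < Fintype.card A :=
    have : Nonempty A := ⟨X ω⟩
    Nat.cast_pos.2 Fintype.card_pos
  have ratio_pos (ω : Ω) (hω : P ω ≠ 0) : 0 < Fintype.card A * (J ω / M ω) :=
    mul_pos (card_pos ω) (div_pos (prob_pos hP hω ⟨rfl, rfl⟩) (prob_pos hP hω rfl))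
  have split_log (ω : Ω) : P ω * Real.log (J ω / (K ω * M ω)) =
      P ω * Real.log (Fintype.card A * (J ω / M ω)) +
        P ω * Real.log (Fintype.card A * K ω)⁻¹ := by
    rcases eq_or_ne (P ω) 0 with hω | hω
    · simp only [hω, zero_mul, add_zero]
    have K_pos : 0 < K ω := prob_pos hP hω rfl
    have A_pos := card_pos ω
    rw [← mul_add, ← Real.log_mul (ratio_pos ω hω).ne' (by positivity)]
    congr 2
    field_simp
  have conditional_part : ∑ ω, P ω * Real.log (Fintype.card A * (J ω / M ω)) ≤ Real.log C := by
    refine sum_mul_log_le_log (fun ω _ => hP ω) hP1 (fun ω _ => ratio_pos ω) ?_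
    simp_rw [mul_left_comm (P _), ← mul_sum]
    exact hC
  calc mutualInfo P X Y = ∑ ω, P ω * Real.log (J ω / (K ω * M ω)) := mutualInfo_eq_sum P X Y
    _ = ∑ ω, P ω * Real.log (Fintype.card A * (J ω / M ω)) +
          ∑ ω, P ω * Real.log (Fintype.card A * K ω)⁻¹ := by
        simp_rw [split_log, sum_add_distrib]
    _ ≤ Real.log C + 0 :=
        add_le_add conditional_part (sum_mul_log_inv_card_mul_prob_nonpos hP hP1 X)
    _ = Real.log C := add_zero _

end CondCollisionProb

section Hashing

variable {R S T U F : Type*} [Fintype R] [Fintype U] [DecidableEq T]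

lemma sum_card_collisions_le [DecidableEq S] (h : U → R → T) {ε : ℝ} (hε : 0 ≤ ε)
    (hh : ∀ r r', r ≠ r' → (#{u | h u r = h u r'} : ℝ) / Fintype.card U ≤ ε)
    (ρ : R → S) (x : R) :
    ∑ u, (#{x' | h u x' = h u x ∧ ρ x' = ρ x} : ℝ) ≤
      Fintype.card U * (1 + ε * #{x' | ρ x' = ρ x}) := by
  classical
  have collisions_le (x' : R) :
      (#{u | h u x' = h u x} : ℝ) ≤ Fintype.card U * ((if x' = x then 1 else 0) + ε) := by
    split_ifs with hx
    · calc (#{u | h u x' = h u x} : ℝ) ≤ Fintype.card U * 1 := by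
            rw [mul_one]; exact_mod_cast card_le_univ _
        _ ≤ Fintype.card U * (1 + ε) := by gcongr; linarith
    · rcases isEmpty_or_nonempty U with hU | hU
      · simp
      · rw [zero_add, mul_comm]
        exact (div_le_iff₀ (Nat.cast_pos.2 Fintype.card_pos)).1 (hh x' x hx)
  have double_count : ∑ u, #{x' | h u x' = h u x ∧ ρ x' = ρ x} =
      ∑ x' with ρ x' = ρ x, #{u | h u x' = h u x} := by
    simpa only [bipartiteAbove, bipartiteBelow, filter_filter, and_comm] using
      sum_card_bipartiteAbove_eq_sum_card_bipartiteBelow (s := (univ : Finset U))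
        (t := ({x' | ρ x' = ρ x} : Finset R)) fun u x' => h u x' = h u x
  calc ∑ u, (#{x' | h u x' = h u x ∧ ρ x' = ρ x} : ℝ)
      = ∑ x' with ρ x' = ρ x, (#{u | h u x' = h u x} : ℝ) := mod_cast double_count
    _ ≤ ∑ x' with ρ x' = ρ x, Fintype.card U * ((if x' = x then 1 else 0) + ε) :=
        sum_le_sum fun x' _ => collisions_le x'
    _ = Fintype.card U * (1 + ε * #{x' | ρ x' = ρ x}) := by
        rw [← mul_sum, sum_add_distrib, sum_ite_eq', if_pos (by simp), sum_const, nsmul_eq_mul,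
          mul_comm ε]

lemma card_filter_and_prodMk_eq [DecidableEq S] [DecidableEq U] (p : R × U → Prop)
    [DecidablePred p] (ρ : R → S) (s : S) (u : U) :
    #{ω : R × U | p ω ∧ (ρ ω.1, ω.2) = (s, u)} = #{x | p (x, u) ∧ ρ x = s} := by
  rw [← card_map (Function.Embedding.sectL R u)]
  congr 1
  ext ⟨x, v⟩
  simp only [mem_filter, mem_univ, true_and, mem_map, Function.Embedding.sectL_apply,
    Prod.mk.injEq]
  grind

lemma condCollisionProb_hash_eq [DecidableEq S] [DecidableEq U] (h : U → R → T) (ρ : R → S) :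
    condCollisionProb (fun _ : R × U => (Fintype.card (R × U) : ℝ)⁻¹)
        (fun ω => h ω.2 ω.1) (fun ω => (ρ ω.1, ω.2)) =
      (∑ x, (∑ u, (#{x' | h u x' = h u x ∧ ρ x' = ρ x} : ℝ)) / #{x' | ρ x' = ρ x}) /
        (Fintype.card R * Fintype.card U) := by
  have card_joint (x : R) (u : U) :
      #{ω : R × U | h ω.2 ω.1 = h u x ∧ (ρ ω.1, ω.2) = (ρ x, u)} =
        #{x' | h u x' = h u x ∧ ρ x' = ρ x} :=
    card_filter_and_prodMk_eq (fun ω => h ω.2 ω.1 = h u x) ρ (ρ x) u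
  have card_view (x : R) (u : U) :
      #{ω : R × U | (ρ ω.1, ω.2) = (ρ x, u)} = #{x' | ρ x' = ρ x} := by
    simpa only [true_and] using card_filter_and_prodMk_eq (fun _ => True) ρ (ρ x) u
  simp_rw [condCollisionProb, prob_const, Fintype.sum_prod_type, card_joint, card_view, sum_div]
  refine sum_congr rfl fun x _ => sum_congr rfl fun u _ => ?_
  have : Nonempty (R × U) := ⟨(x, u)⟩
  have weight_ne_zero : (Fintype.card (R × U) : ℝ)⁻¹ ≠ 0 :=
    inv_ne_zero (Nat.cast_ne_zero.2 Fintype.card_ne_zero)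
  rw [mul_div_mul_right _ _ weight_ne_zero, Fintype.card_prod, Nat.cast_mul, inv_mul_eq_div]

theorem condCollisionProb_hash_le [Fintype S] [DecidableEq S] [DecidableEq U] [Nonempty R]
    [Nonempty U] (h : U → R → T) {ε : ℝ} (hε : 0 ≤ ε)
    (hh : ∀ r r', r ≠ r' → (#{u | h u r = h u r'} : ℝ) / Fintype.card U ≤ ε) (ρ : R → S) :
    condCollisionProb (fun _ : R × U => (Fintype.card (R × U) : ℝ)⁻¹)
        (fun ω => h ω.2 ω.1) (fun ω => (ρ ω.1, ω.2)) ≤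
      Fintype.card S / Fintype.card R + ε := by
  have fibre_pos (x : R) : (0 : ℝ) < #{x' | ρ x' = ρ x} :=
    Nat.cast_pos.2 (card_pos.2 ⟨x, by simp⟩)
  have sum_inv_fibre_le : ∑ x, (#{x' | ρ x' = ρ x} : ℝ)⁻¹ ≤ Fintype.card S := by
    simpa only [prob_const, mul_one, one_mul] using sum_mul_inv_prob_le_card (fun _ : R => 1) ρ
  have R_pos : (0 : ℝ) < Fintype.card R := Nat.cast_pos.2 Fintype.card_pos
  have U_pos : (0 : ℝ) < Fintype.card U := Nat.cast_pos.2 Fintype.card_pos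
  rw [condCollisionProb_hash_eq, div_le_iff₀ (mul_pos R_pos U_pos)]
  calc ∑ x, (∑ u, (#{x' | h u x' = h u x ∧ ρ x' = ρ x} : ℝ)) / #{x' | ρ x' = ρ x}
      ≤ ∑ x, Fintype.card U * (1 + ε * #{x' | ρ x' = ρ x}) / #{x' | ρ x' = ρ x} := by
        gcongr with x
        exact sum_card_collisions_le h hε hh ρ x
    _ = Fintype.card U * (∑ x, (#{x' | ρ x' = ρ x} : ℝ)⁻¹ + Fintype.card R * ε) := by
        have card_mul : (Fintype.card R : ℝ) * ε = ∑ _x : R, ε := by simp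
        rw [card_mul, ← sum_add_distrib, mul_sum]
        refine sum_congr rfl fun x _ => ?_
        have := fibre_pos x
        field_simp
    _ ≤ Fintype.card U * (Fintype.card S + Fintype.card R * ε) := by gcongr
    _ = (Fintype.card S / Fintype.card R + ε) * (Fintype.card R * Fintype.card U) := by
        field_simp

theorem mutualInfo_hash_le [Nonempty R] [Nonempty U] [Fintype S] [Fintype T] [Fintype F]
    [DecidableEq F] (h : U → R → T) {ε : ℝ} (hε : 0 ≤ ε)
    (hh : ∀ r r', r ≠ r' → (#{u | h u r = h u r'} : ℝ) / Fintype.card U ≤ ε)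
    (ρ : R → S) (view : S × U → F) :
    mutualInfo (fun _ : R × U => (Fintype.card (R × U) : ℝ)⁻¹)
        (fun ω => h ω.2 ω.1) (fun ω => view (ρ ω.1, ω.2)) ≤
      Real.log (Fintype.card T * (Fintype.card S / Fintype.card R + ε)) := by
  classical
  have weight_nonneg (_ : R × U) : (0 : ℝ) ≤ (Fintype.card (R × U) : ℝ)⁻¹ := by positivity
  have weight_sum : ∑ _ω : R × U, (Fintype.card (R × U) : ℝ)⁻¹ = 1 := by
    rw [sum_const, card_univ, nsmul_eq_mul, mul_inv_cancel₀ (by simp)]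
  refine mutualInfo_le_log_of_condCollisionProb_le weight_nonneg weight_sum _ _ ?_
  gcongr
  exact (condCollisionProb_comp_le weight_nonneg _ (fun ω => (ρ ω.1, ω.2)) view).trans
    (condCollisionProb_hash_le h hε hh ρ)

end Hashing

lemma AlmostUniversal₂.card_seed_collisions_div_le {R T 𝓦 𝓗 : Type*} [DecidableEq T] [Fintype 𝓦]
    [Nonempty 𝓦] [Fintype 𝓗] [Nonempty 𝓗] {ε : ℝ} {𝓖 : Finset (R → T)} (hAU : AlmostUniversal₂ ε 𝓖)
    {r r' : R} (hr : r ≠ r') :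
    (#{u : 𝓦 × {g // g ∈ 𝓖} × 𝓗 | u.2.1.1 r = u.2.1.1 r'} : ℝ) /
      Fintype.card (𝓦 × {g // g ∈ 𝓖} × 𝓗) ≤ ε := by
  have filter_eq : ({u : 𝓦 × {g // g ∈ 𝓖} × 𝓗 | u.2.1.1 r = u.2.1.1 r'} : Finset _) =
      univ ×ˢ ({g | g.1 r = g.1 r'} : Finset {g // g ∈ 𝓖}) ×ˢ univ := by
    ext u
    simp only [mem_filter, mem_product, mem_univ, true_and, and_true]
  have card_subtype_filter : #({g | g.1 r = g.1 r'} : Finset {g // g ∈ 𝓖}) =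
      #{g ∈ 𝓖 | g r = g r'} := by
    simp_rw [card_filter]
    exact sum_coe_sort 𝓖 fun g => if g r = g r' then 1 else 0
  calc _ = (#{g ∈ 𝓖 | g r = g r'} : ℝ) / #𝓖 := by
        rw [filter_eq, card_product, card_product, card_subtype_filter, card_univ, card_univ,
          Fintype.card_prod, Fintype.card_prod, Fintype.card_coe]
        push_cast
        rw [mul_div_mul_left _ _ (by simp), mul_div_mul_right _ _ (by simp)]
    _ ≤ ε := hAU r r' hr

/-- `ρ` is what leaks of the raw key; in `stmt_7` it is the restriction to the coordinates `O`. -/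
theorem stmt_7_general {R S T 𝓦 𝓗 F : Type*} [Fintype R] [Nonempty R] [Fintype S]
    [Fintype T] [DecidableEq T] [Fintype 𝓦] [Nonempty 𝓦] [Fintype 𝓗] [Nonempty 𝓗]
    [Fintype F] [DecidableEq F] (ρ : R → S) {ε : ℝ} (hε : 0 ≤ ε) {𝓖 : Finset (R → T)}
    (h𝓖 : 𝓖.Nonempty) (hAU : AlmostUniversal₂ ε 𝓖)
    (view : S × 𝓦 × {g // g ∈ 𝓖} × 𝓗 → F) :
    mutualInfo
      (fun _ : R × 𝓦 × {g // g ∈ 𝓖} × 𝓗 =>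
        (Fintype.card (R × 𝓦 × {g // g ∈ 𝓖} × 𝓗) : ℝ)⁻¹)
      (fun ω => (ω.2.2.1 : R → T) ω.1) (fun ω => view (ρ ω.1, ω.2))
      ≤ Real.log (Fintype.card T * (Fintype.card S / Fintype.card R + ε)) :=
  have : Nonempty {g // g ∈ 𝓖} := h𝓖.to_subtype
  mutualInfo_hash_le (fun u : 𝓦 × {g // g ∈ 𝓖} × 𝓗 => u.2.1.1) hε
    (fun _ _ => hAU.card_seed_collisions_div_le) ρ view

/-- Non-repudiation bound (paper's equations (14)/(16)): with `X` uniform on `n`-bit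
strings, `W` uniform on `n'`-bit strings, `G_A` uniform on an `ε`-almost-universal₂ family
`𝓖A`, `G_B` uniform on a nonempty finite set `𝓗`, all jointly independent (uniform on the
product space), and `Φ` any function of `(X|_O, W, G_B)`, the mutual information between
`K_au^A = G_A(X)` and `(Φ(X|_O, W, G_B), G_A, G_B)` is at most `ln(2^{m+c}/2^n + 2^m·ε)`. -/
theorem stmt_7 (n n' m c : ℕ) (hc : c ≤ n) (O : Finset (Fin n)) (hO : O.card = c)
    (ε : ℝ) (hε : 0 ≤ ε)
    (𝓖A : Finset ((Fin n → ZMod 2) → (Fin m → ZMod 2))) (h𝓖A : 𝓖A.Nonempty)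
    (hAU : AlmostUniversal₂ ε 𝓖A)
    {𝓗 F : Type*} [Fintype 𝓗] [Nonempty 𝓗] [DecidableEq 𝓗] [Fintype F] [DecidableEq F]
    (Φ : ({i // i ∈ O} → ZMod 2) → (Fin n' → ZMod 2) → 𝓗 → F) :
    mutualInfo
      (fun _ : (Fin n → ZMod 2) × (Fin n' → ZMod 2) × {g // g ∈ 𝓖A} × 𝓗 =>
        (Fintype.card ((Fin n → ZMod 2) × (Fin n' → ZMod 2) × {g // g ∈ 𝓖A} × 𝓗) : ℝ)⁻¹)
      (fun ω => (ω.2.2.1 : (Fin n → ZMod 2) → (Fin m → ZMod 2)) ω.1)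
      (fun ω => (Φ (fun i : {i // i ∈ O} => ω.1 i) ω.2.1 ω.2.2.2, ω.2.2.1, ω.2.2.2))
      ≤ Real.log ((2 : ℝ) ^ (m + c) / (2 : ℝ) ^ n + (2 : ℝ) ^ m * ε) := by
  simpa [pow_add, mul_add, mul_div_assoc, hO] using
    stmt_7_general (fun x (i : {i // i ∈ O}) => x i) hε h𝓖A hAU
      fun v => (Φ v.1 v.2.1 v.2.2.2, v.2.2.1, v.2.2.2)
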